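/- Every maximal C¹ solution (x,v) of the repulsive Kepler ODE with x(t₀) ≠ 0 at some time t₀ is defined for all t ∈ ℝ, and along it one has the uniform bounds |x(t)| ≥ q/H and |v(t)| ≤ √H for all t, where H = |v(t₀)|² + q/|x(t₀)| is the conserved energy. -/

import Mathlib

/-!
The energy `H = |v|² + q/|x|` has zero time derivative along a solution, and both of its summands
are nonnegative, so `q/|x| ≤ H` and `|v|² ≤ H`; these are the two bounds (`IsKeplerSol.energy_eq`,
`IsKeplerSol.bounds`).

For globality, suppose that `I` is bounded above and let `b = sup I`. The bounds make the phase
curve `(x, v)` Lipschitz on `I`, hence it has a limit at `b`, whose position component is nonzero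
because `|x| ≥ q/H`. The Kepler vector field is smooth near that limit, so Picard–Lindelöf gives a
solution starting there at time `b`. Gluing it to the right of `(x, v)` yields a differentiable
solution, since the left derivative at `b` is the limit of the derivatives (`exists_glue_right`).
This strictly extends `I`, contradicting maximality (`not_bddAbove_of_maximal`). Lower bounds on `I` are
excluded by the time reversal `(x(-t), -v(-t))`.
-/

open scoped RealInnerProductSpace

noncomputable section

/-- Euclidean three-space. -/
abbrev R3 : Type := EuclideanSpace ℝ (Fin 3)

open Set Filter Topology

/-- `(x, v)` solves the repulsive Kepler system, away from the singularity, at all times of `I`. -/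
def IsKeplerSol (q : ℝ) (I : Set ℝ) (x v : ℝ → R3) : Prop :=
  ∀ t ∈ I, x t ≠ 0 ∧ HasDerivAt x (v t) t ∧ HasDerivAt v ((q / 2 / ‖x t‖ ^ 3) • x t) t

/-- The Kepler vector field on phase space, with the junk value `(v, 0)` at `x = 0`. -/
def keplerField (q : ℝ) (p : R3 × R3) : R3 × R3 := (p.2, (q / 2 / ‖p.1‖ ^ 3) • p.1)

lemma contDiffAt_keplerField (q : ℝ) {p : R3 × R3} (hp : p.1 ≠ 0) :
    ContDiffAt ℝ 1 (keplerField q) p := by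
  have hn : ContDiffAt ℝ 1 (fun p : R3 × R3 => ‖p.1‖ ^ 3) p :=
    (contDiffAt_fst.norm ℝ hp).pow 3
  have h3 : ‖p.1‖ ^ 3 ≠ 0 := pow_ne_zero _ (norm_ne_zero_iff.2 hp)
  exact contDiffAt_snd.prodMk ((contDiffAt_const.div hn h3).smul contDiffAt_fst)

namespace IsKeplerSol

variable {q : ℝ} {I : Set ℝ} {x v : ℝ → R3}

lemma hasDerivAt_energy (h : IsKeplerSol q I x v) {t : ℝ} (ht : t ∈ I) :
    HasDerivAt (fun t => ‖v t‖ ^ 2 + q / ‖x t‖) 0 t := by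
  obtain ⟨h0, hx, hv⟩ := h t ht
  have hpos : 0 < ‖x t‖ := norm_pos_iff.2 h0
  have hn : HasDerivAt (fun t => ‖x t‖) (⟪x t, v t⟫ / ‖x t‖) t := by
    have := hx.norm_sq.sqrt (by positivity)
    simp only [Real.sqrt_sq (norm_nonneg _)] at this
    convert! this using 1
    field_simp
  convert! hv.norm_sq.add ((hasDerivAt_const t q).div hn hpos.ne') using 1
  rw [inner_smul_right, real_inner_comm]
  field_simp
  ring

lemma energy_eq (h : IsKeplerSol q I x v) (hI : IsOpen I) (hc : Convex ℝ I) {s t : ℝ}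
    (hs : s ∈ I) (ht : t ∈ I) :
    ‖v s‖ ^ 2 + q / ‖x s‖ = ‖v t‖ ^ 2 + q / ‖x t‖ :=
  hI.is_const_of_deriv_eq_zero hc.isPreconnected
    (fun _ hr => (h.hasDerivAt_energy hr).differentiableAt.differentiableWithinAt)
    (fun _ hr => (h.hasDerivAt_energy hr).deriv) hs ht

lemma bounds (h : IsKeplerSol q I x v) (hq : 0 < q) (hI : IsOpen I) (hc : Convex ℝ I) {s t : ℝ}
    (hs : s ∈ I) (ht : t ∈ I) :
    q / (‖v s‖ ^ 2 + q / ‖x s‖) ≤ ‖x t‖ ∧ ‖v t‖ ≤ Real.sqrt (‖v s‖ ^ 2 + q / ‖x s‖) := by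
  rw [h.energy_eq hI hc hs ht]
  have hpos : 0 < ‖x t‖ := norm_pos_iff.2 (h t ht).1
  have hqx : 0 < q / ‖x t‖ := by positivity
  constructor
  · rw [div_le_comm₀ (by positivity) hpos]
    nlinarith [sq_nonneg ‖v t‖]
  · exact Real.le_sqrt_of_sq_le (by linarith)

/-- A solution stays in a phase-space region where the vector field is bounded, so its phase curve
agrees on `I` with a globally defined continuous curve. This encodes the existence of limits at the
endpoints of `I`. -/
lemma exists_continuous_extension (h : IsKeplerSol q I x v) (hq : 0 < q) (hI : IsOpen I)
    (hc : Convex ℝ I) {s : ℝ} (hs : s ∈ I) :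
    ∃ g : ℝ → R3 × R3, Continuous g ∧ EqOn (fun t => (x t, v t)) g I := by
  set H := ‖v s‖ ^ 2 + q / ‖x s‖ with hH
  have hspos : 0 < ‖x s‖ := norm_pos_iff.2 (h s hs).1
  have hHpos : 0 < H := by positivity
  have hlip : LipschitzOnWith (Real.toNNReal (max (Real.sqrt H) (q / 2 / (q / H) ^ 2)))
      (fun t => (x t, v t)) I := by
    refine hc.lipschitzOnWith_of_nnnorm_hasDerivWithin_le
      (fun t ht => ((h t ht).2.1.prodMk (h t ht).2.2).hasDerivWithinAt) fun t ht => ?_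
    obtain ⟨b1, b2⟩ := h.bounds hq hI hc hs ht
    have hpos : 0 < ‖x t‖ := norm_pos_iff.2 (h t ht).1
    rw [← NNReal.coe_le_coe, coe_nnnorm, Real.coe_toNNReal _ (by positivity), Prod.norm_def]
    refine max_le_max b2 ?_
    have : ‖(q / 2 / ‖x t‖ ^ 3) • x t‖ = q / 2 / ‖x t‖ ^ 2 := by
      rw [norm_smul, Real.norm_of_nonneg (by positivity)]
      field_simp
    rw [this]
    gcongr
  obtain ⟨g, hg, hgz⟩ := hlip.extend_finite_dimension
  exact ⟨g, hg.continuous, hgz⟩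

lemma comp_neg (h : IsKeplerSol q I x v) :
    IsKeplerSol q (-I) (fun t => x (-t)) (fun t => -v (-t)) := by
  intro t ht
  obtain ⟨h0, hx, hv⟩ := h (-t) ht
  refine ⟨h0, ?_, ?_⟩
  · convert! hx.scomp t (hasDerivAt_neg t) using 1
    simp
  · convert! (hv.scomp t (hasDerivAt_neg t)).neg using 1
    simp

end IsKeplerSol

/-- A solution `z` of `z' = F(z)` on an open set ending at `b`, with a limit `g b` there at which
`F` is `C¹`, continues to `[b, b + ε)`, with values in any prescribed neighbourhood of `g b` on
that part. -/
lemma exists_glue_right {E : Type*} [NormedAddCommGroup E] [NormedSpace ℝ E] [CompleteSpace E]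
    {F : E → E} {z g : ℝ → E} {I : Set ℝ} {b : ℝ} {U : Set E}
    (hI : I ⊆ Iio b) (hb : I ∈ 𝓝[<] b) (hz : ∀ t ∈ I, HasDerivAt z (F (z t)) t)
    (hg : Continuous g) (hzg : EqOn z g I) (hF : ContDiffAt ℝ 1 F (g b)) (hU : U ∈ 𝓝 (g b)) :
    ∃ ε > 0, ∃ y : ℝ → E, EqOn y z I ∧ (∀ t ∈ Ico b (b + ε), y t ∈ U) ∧
      ∀ t ∈ I ∪ Ico b (b + ε), HasDerivAt y (F (y t)) t := by
  obtain ⟨α, hαb, ε₁, hε₁, hα⟩ :=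
    hF.exists_forall_mem_closedBall_exists_eq_forall_mem_Ioo_hasDerivAt₀ b
  have hαb' : HasDerivAt α (F (α b)) b := hα b ⟨by linarith, by linarith⟩
  have hαU : ∀ᶠ t in 𝓝 b, α t ∈ U := hαb'.continuousAt (by rwa [hαb])
  obtain ⟨ε₂, hε₂, hball⟩ := Metric.eventually_nhds_iff.1 hαU
  set y : ℝ → E := fun t => if t < b then z t else α t with hy
  have hyz : ∀ t < b, y t = z t := fun t ht => if_pos ht
  have hyα : ∀ t, b ≤ t → y t = α t := fun t ht => if_neg (not_lt.2 ht)
  have hyI : ∀ t ∈ I, HasDerivAt y (F (y t)) t := fun t ht => by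
    rw [hyz t (hI ht)]
    exact (hz t ht).congr_of_eventuallyEq
      (eventually_of_mem (Iio_mem_nhds (hI ht)) fun s hs => hyz s hs)
  have hyg : EqOn y g I := fun t ht => (hyz t (hI ht)).trans (hzg ht)
  have hyb : y b = g b := (hyα b le_rfl).trans hαb
  refine ⟨min ε₁ ε₂, lt_min hε₁ hε₂, y, fun t ht => hyz t (hI ht), fun t ht => ?_, ?_⟩
  · rw [hyα t ht.1]
    apply hball
    rw [Real.dist_eq, abs_of_nonneg (by linarith [ht.1])]
    linarith [ht.2, min_le_right ε₁ ε₂]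
  rintro t (ht | ⟨ht1, ht2⟩)
  · exact hyI t ht
  rcases ht1.eq_or_lt with rfl | hbt
  · -- The left derivative at the junction is the limit of the derivatives on `I`.
    have hleft : HasDerivWithinAt y (F (y b)) (Iic b) b := by
      refine hasDerivWithinAt_Iic_of_tendsto_deriv
        (fun s hs => (hyI s hs).differentiableAt.differentiableWithinAt)
        (hg.continuousWithinAt.congr (fun s hs => hyg hs) hyb) hb ?_
      have hlim : Tendsto (fun s => F (g s)) (𝓝[<] b) (𝓝 (F (y b))) := by
        rw [hyb]
        exact (hF.continuousAt.comp (f := g) hg.continuousAt).tendsto.mono_left nhdsWithin_le_nhds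
      refine hlim.congr' (eventually_of_mem hb fun s hs => ?_)
      simp only [(hyI s hs).deriv, hyg hs]
    have hright : HasDerivWithinAt y (F (y b)) (Ici b) b := by
      rw [hyα b le_rfl]
      exact hαb'.hasDerivWithinAt.congr (fun s hs => hyα s hs) (hyα b le_rfl)
    simpa using hleft.union hright
  · rw [hyα t ht1]
    refine (hα t ⟨by linarith, by linarith [min_le_left ε₁ ε₂]⟩).congr_of_eventuallyEq
      (eventually_of_mem (Ioi_mem_nhds hbt) fun s hs => hyα s (le_of_lt hs))

/-- A maximal solution has no finite upper end time. -/
lemma not_bddAbove_of_maximal {q : ℝ} (hq : 0 < q) {I : Set ℝ} (hI : IsOpen I) (hc : Convex ℝ I)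
    {t₀ : ℝ} (ht₀ : t₀ ∈ I) {x v : ℝ → R3} (h : IsKeplerSol q I x v)
    (hmax : ∀ (J : Set ℝ) (y w : ℝ → R3), IsOpen J → Convex ℝ J → I ⊆ J →
      IsKeplerSol q J y w → (∀ t ∈ I, y t = x t ∧ w t = v t) → J = I) :
    ¬ BddAbove I := by
  intro hbdd
  set b := sSup I with hbdef
  have hlub : IsLUB I b := isLUB_csSup ⟨t₀, ht₀⟩ hbdd
  have hbI : b ∉ I := fun hbI => by
    obtain ⟨ε, hε, hball⟩ := Metric.isOpen_iff.1 hI b hbI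
    have : b + ε / 2 ∈ I := hball (by
      rw [Metric.mem_ball, Real.dist_eq, add_sub_cancel_left, abs_of_pos (by positivity)]
      linarith)
    linarith [hlub.1 this]
  have hIb : I ⊆ Iio b := fun t ht =>
    lt_of_le_of_ne (hlub.1 ht) fun e => hbI (e ▸ ht)
  have hIco : Ico t₀ b ⊆ I := fun t ht => by
    obtain ⟨s, hs, hts, -⟩ := hlub.exists_between ht.2
    exact hc.ordConnected.out ht₀ hs ⟨ht.1, hts.le⟩
  have hnhds : I ∈ 𝓝[<] b :=
    mem_nhdsLT_iff_exists_Ico_subset.2 ⟨t₀, hIb ht₀, hIco⟩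
  obtain ⟨g, hg, hgz⟩ := h.exists_continuous_extension hq hI hc ht₀
  have hgb : (g b).1 ≠ 0 := by
    have hlim : Tendsto (fun t => ‖(g t).1‖) (𝓝[<] b) (𝓝 ‖(g b).1‖) :=
      (hg.fst.norm.tendsto b).mono_left nhdsWithin_le_nhds
    have hle : q / (‖v t₀‖ ^ 2 + q / ‖x t₀‖) ≤ ‖(g b).1‖ := by
      refine ge_of_tendsto hlim (eventually_of_mem hnhds fun t ht => ?_)
      rw [← hgz ht]
      exact (h.bounds hq hI hc ht₀ ht).1
    have hpos : 0 < ‖x t₀‖ := norm_pos_iff.2 (h t₀ ht₀).1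
    have : 0 < q / (‖v t₀‖ ^ 2 + q / ‖x t₀‖) := by positivity
    exact norm_pos_iff.1 (this.trans_le hle)
  have hU : {p : R3 × R3 | p.1 ≠ 0} ∈ 𝓝 (g b) :=
    (isOpen_ne.preimage continuous_fst).mem_nhds hgb
  obtain ⟨ε, hε, y, hyz, hyU, hy⟩ := exists_glue_right (F := keplerField q) hIb hnhds
    (fun t ht => (h t ht).2.1.prodMk (h t ht).2.2) hg hgz (contDiffAt_keplerField q hgb) hU
  have hJ : I ∪ Ico b (b + ε) = I ∪ Ioo t₀ (b + ε) := by
    ext t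
    constructor
    · rintro (ht | ht)
      · exact Or.inl ht
      · exact Or.inr ⟨(hIb ht₀).trans_le ht.1, ht.2⟩
    · rintro (ht | ht)
      · exact Or.inl ht
      · rcases lt_or_ge t b with htb | htb
        · exact Or.inl (hIco ⟨ht.1.le, htb⟩)
        · exact Or.inr ⟨htb, ht.2⟩
  have hJopen : IsOpen (I ∪ Ico b (b + ε)) := hJ ▸ hI.union isOpen_Ioo
  have hJconv : Convex ℝ (I ∪ Ico b (b + ε)) := by
    have ht₀b : t₀ < b := hIb ht₀
    have hm : (t₀ + b) / 2 ∈ I := hIco ⟨by linarith, by linarith⟩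
    rw [hJ]
    have hm' : (t₀ + b) / 2 ∈ Ioo t₀ (b + ε) := ⟨by linarith, by linarith⟩
    exact (IsPreconnected.union _ hm hm' hc.isPreconnected
      isPreconnected_Ioo).convex
  have hJI := hmax (I ∪ Ico b (b + ε)) (fun t => (y t).1) (fun t => (y t).2) hJopen hJconv
    subset_union_left
    (fun t ht => ⟨by
      rcases ht with ht | ht
      · simp only [hyz ht]
        exact (h t ht).1
      · exact hyU t ht, (hy t ht).fst, (hy t ht).snd⟩)
    (fun t ht => by simp only [hyz ht, and_self])
  exact hbI (hJI ▸ Or.inr ⟨le_rfl, by linarith⟩)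

/-- Any maximal `C¹` solution of the repulsive Kepler ODE `x' = v`, `v' = (q/2)·x/|x|³`
(on an open interval `I ∋ t₀`, not extendable to any strictly larger open interval)
is global, i.e. `I = ℝ`, and along it `|x(t)| ≥ q/H` and `|v(t)| ≤ √H`, where
`H = |v(t₀)|² + q/|x(t₀)|` is the conserved energy. -/
theorem kepler_global_existence_and_bounds (q : ℝ) (hq : 0 < q)
    (I : Set ℝ) (hIopen : IsOpen I) (hIconv : Convex ℝ I)
    (t₀ : ℝ) (ht₀ : t₀ ∈ I) (x v : ℝ → R3)
    (hx0 : ∀ t ∈ I, x t ≠ 0)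
    (hx : ∀ t ∈ I, HasDerivAt x (v t) t)
    (hv : ∀ t ∈ I, HasDerivAt v ((q / 2 / ‖x t‖ ^ 3) • x t) t)
    (hmax : ∀ (J : Set ℝ) (y w : ℝ → R3), IsOpen J → Convex ℝ J → I ⊆ J →
      (∀ t ∈ J, y t ≠ 0) →
      (∀ t ∈ J, HasDerivAt y (w t) t) →
      (∀ t ∈ J, HasDerivAt w ((q / 2 / ‖y t‖ ^ 3) • y t) t) →
      (∀ t ∈ I, y t = x t ∧ w t = v t) → J = I) :
    I = Set.univ ∧
      ∀ t ∈ I,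
        q / (‖v t₀‖ ^ 2 + q / ‖x t₀‖) ≤ ‖x t‖ ∧
        ‖v t‖ ≤ Real.sqrt (‖v t₀‖ ^ 2 + q / ‖x t₀‖) := by
  have h : IsKeplerSol q I x v := fun t ht => ⟨hx0 t ht, hx t ht, hv t ht⟩
  have hmax' : ∀ (J : Set ℝ) (y w : ℝ → R3), IsOpen J → Convex ℝ J → I ⊆ J →
      IsKeplerSol q J y w → (∀ t ∈ I, y t = x t ∧ w t = v t) → J = I :=
    fun J y w hJ hJc hIJ hs he => hmax J y w hJ hJc hIJ (fun t ht => (hs t ht).1)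
      (fun t ht => (hs t ht).2.1) (fun t ht => (hs t ht).2.2) he
  refine ⟨?_, fun t ht => h.bounds hq hIopen hIconv ht₀ ht⟩
  have habove : ¬ BddAbove I := not_bddAbove_of_maximal hq hIopen hIconv ht₀ h hmax'
  have hbelow : ¬ BddBelow I := by
    rw [← bddAbove_neg]
    refine not_bddAbove_of_maximal hq hIopen.neg hIconv.neg (t₀ := -t₀) (by simpa using ht₀) h.comp_neg ?_
    intro J y w hJ hJc hIJ hs he
    have hJI : -J = I := by
      refine hmax' (-J) _ _ hJ.neg hJc.neg (fun t ht => hIJ (by simpa using ht)) hs.comp_neg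
        fun t ht => ?_
      have := he (-t) (by simpa using ht)
      simpa [neg_eq_iff_eq_neg] using this
    rw [← hJI, neg_neg]
  refine eq_univ_of_forall fun t => ?_
  obtain ⟨r, hr, htr⟩ := not_bddAbove_iff.1 habove t
  obtain ⟨s, hs, hst⟩ := not_bddBelow_iff.1 hbelow t
  exact hIconv.ordConnected.out hs hr ⟨hst.le, htr.le⟩
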